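/- arXiv:1911.06920 — 2 statements merged into one kernel-verified Lean document; each statement's English description precedes it below -/
import Mathlib

section
/- (Nonconvex case, fixed stepsize.) Consider a TRish process for f with constant parameters (α_k, γ_{1,k}, γ_{2,k}) = (α, γ1, γ2) for all k, where γ1 ≥ γ2 > 0. Suppose there exist M_g, M_H > 0 such that for all k, E[‖∇f(x_k) − g_k‖² | ℱ_k] ≤ M_g and ‖H_k‖ ≤ M_H almost surely, and suppose 0 < α ≤ γ2/(4γ1²(L_g + M_H)). Then for every K ≥ 1, E[Σ_{k=1}^K ‖∇f(x_k)‖²] ≤ (8/(γ2·α))·(f(x_1) − f_inf) + K·(8γ1²/γ2² − 1)·M_g. -/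
open MeasureTheory RealInnerProductSpace Filter

noncomputable section

/-- A step `s` achieves Cauchy decrease for `(g, H, Δ)`. -/
def CauchyDecrease {n : ℕ} (g : EuclideanSpace ℝ (Fin n))
    (H : EuclideanSpace ℝ (Fin n) →L[ℝ] EuclideanSpace ℝ (Fin n))
    (Δ : ℝ) (s : EuclideanSpace ℝ (Fin n)) : Prop :=
  ‖s‖ ≤ Δ ∧ ∀ t : ℝ, 0 ≤ t → t * ‖g‖ ≤ Δ →
    ⟪g, s⟫ + (1/2) * ⟪s, H s⟫ ≤ -(t * ‖g‖^2) + (1/2) * t^2 * ⟪g, H g⟫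

/-- The TRish trust-region radius `Δ(α, γ1, γ2, g)`. -/
def radius {n : ℕ} (α γ1 γ2 : ℝ) (g : EuclideanSpace ℝ (Fin n)) : ℝ :=
  if ‖g‖ < 1/γ1 then γ1 * α * ‖g‖
  else if ‖g‖ ≤ 1/γ2 then α
  else γ2 * α * ‖g‖

/-!
The proof is a one-step descent argument followed by telescoping. Write `G = ∇f(x_k)`, `g = g_k`,
`s = s_k`. The radius always satisfies `γ2 α ‖g‖ ≤ Δ ≤ γ1 α ‖g‖`, so the step length `t = γ2 α`
is admissible in the Cauchy decrease condition, and `‖s‖ ≤ γ1 α ‖g‖`. Inserting these in the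
descent lemma `f (x + s) ≤ f x + ⟪G, s⟫ + (L_g / 2) ‖s‖²`, using the bound on `α` for the
second-order terms and Young's inequality for `⟪G - g, s⟫`, gives (`trish_step_decrease`)
`f (x + s) ≤ f x - (γ2 α / 2) ‖g‖² + (α γ1² / γ2) ‖G - g‖²`.

Unbiasedness makes `G` orthogonal in `L²` to `G - g`, whence `E‖g‖² = E‖G‖² + E‖G - g‖²`
(`integral_sq_norm_eq_add`). The coefficient of `E‖G - g‖² ≤ M_g` is then
`α γ1² / γ2 - γ2 α / 2 ≥ 0`, and summing over `k` yields the bound even with `2` in place of `8`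
in both constants; since `f_inf ≤ f x1`, this implies the claim.
-/

/-- The descent lemma for a function whose gradient is `L`-Lipschitz. -/
lemma le_add_inner_gradient_add_sq {n : ℕ} {f : EuclideanSpace ℝ (Fin n) → ℝ}
    (hf : Differentiable ℝ f) {L : ℝ}
    (hlip : ∀ y z, ‖gradient f y - gradient f z‖ ≤ L * ‖y - z‖)
    (x s : EuclideanSpace ℝ (Fin n)) :
    f (x + s) ≤ f x + ⟪gradient f x, s⟫ + L / 2 * ‖s‖ ^ 2 := by
  let φ : ℝ → ℝ := fun t => f (x + t • s) - t * ⟪gradient f x, s⟫ - L / 2 * ‖s‖ ^ 2 * t ^ 2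
  have hφ : ∀ t, HasDerivAt φ
      (⟪gradient f (x + t • s), s⟫ - ⟪gradient f x, s⟫ - L * ‖s‖ ^ 2 * t) t := by
    intro t
    have hline : HasDerivAt (fun t : ℝ => x + t • s) s t := by
      simpa using ((hasDerivAt_id t).smul_const s).const_add x
    have hcomp := (hf (x + t • s)).hasGradientAt.hasFDerivAt.comp_hasDerivAt t hline
    have h := (hcomp.sub ((hasDerivAt_id t).mul_const ⟪gradient f x, s⟫)).sub
      ((hasDerivAt_pow 2 t).const_mul (L / 2 * ‖s‖ ^ 2))
    refine h.congr_deriv ?_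
    simp only [InnerProductSpace.toDual_apply_apply]
    push_cast
    ring
  have hanti : AntitoneOn φ (Set.Icc 0 1) := by
    refine antitoneOn_of_deriv_nonpos (convex_Icc 0 1)
      (fun t _ => (hφ t).continuousAt.continuousWithinAt)
      (fun t _ => (hφ t).differentiableAt.differentiableWithinAt) ?_
    intro t ht
    rw [interior_Icc] at ht
    rw [(hφ t).deriv, ← inner_sub_left]
    have h1 := real_inner_le_norm (gradient f (x + t • s) - gradient f x) s
    have h2 := hlip (x + t • s) x
    rw [add_sub_cancel_left, norm_smul, Real.norm_of_nonneg ht.1.le] at h2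
    nlinarith [mul_le_mul_of_nonneg_right h2 (norm_nonneg s)]
  have h := hanti (by simp) (by simp) zero_le_one
  simp only [φ, one_smul, zero_smul, add_zero] at h
  linarith

lemma radius_le {n : ℕ} {α γ1 γ2 : ℝ} (hα : 0 < α) (hγ2 : 0 < γ2) (hγ12 : γ2 ≤ γ1)
    (g : EuclideanSpace ℝ (Fin n)) : radius α γ1 γ2 g ≤ γ1 * α * ‖g‖ := by
  have hγ1 : 0 < γ1 := hγ2.trans_le hγ12
  unfold radius
  split_ifs with h1 h2
  · exact le_rfl
  · rw [not_lt, div_le_iff₀ hγ1] at h1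
    nlinarith
  · gcongr

lemma le_radius {n : ℕ} {α γ1 γ2 : ℝ} (hα : 0 < α) (hγ2 : 0 < γ2) (hγ12 : γ2 ≤ γ1)
    (g : EuclideanSpace ℝ (Fin n)) : γ2 * α * ‖g‖ ≤ radius α γ1 γ2 g := by
  unfold radius
  split_ifs with h1 h2
  · gcongr
  · rw [le_div_iff₀ hγ2] at h2
    nlinarith
  · exact le_rfl

lemma abs_inner_apply_le {n : ℕ} {H : EuclideanSpace ℝ (Fin n) →L[ℝ] EuclideanSpace ℝ (Fin n)}
    {M : ℝ} (hH : ‖H‖ ≤ M) (v : EuclideanSpace ℝ (Fin n)) : |⟪v, H v⟫| ≤ M * ‖v‖ ^ 2 := by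
  calc |⟪v, H v⟫| ≤ ‖v‖ * ‖H v‖ := abs_real_inner_le_norm _ _
    _ ≤ ‖v‖ * (M * ‖v‖) := by gcongr; exact H.le_of_opNorm_le hH v
    _ = M * ‖v‖ ^ 2 := by ring

/-- The pathwise decrease achieved by one TRish step. -/
lemma trish_step_decrease {n : ℕ} {f : EuclideanSpace ℝ (Fin n) → ℝ}
    (hf : Differentiable ℝ f) {L M α γ1 γ2 : ℝ} (hL : 0 < L) (hM : 0 < M)
    (hlip : ∀ y z, ‖gradient f y - gradient f z‖ ≤ L * ‖y - z‖)
    (hγ2 : 0 < γ2) (hγ12 : γ2 ≤ γ1) (hα : 0 < α) (hαub : α ≤ γ2 / (4 * γ1 ^ 2 * (L + M)))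
    {x g s : EuclideanSpace ℝ (Fin n)}
    {H : EuclideanSpace ℝ (Fin n) →L[ℝ] EuclideanSpace ℝ (Fin n)} (hH : ‖H‖ ≤ M)
    (hs : CauchyDecrease g H (radius α γ1 γ2 g) s) :
    f (x + s) ≤ f x - γ2 * α / 2 * ‖g‖ ^ 2 + α * γ1 ^ 2 / γ2 * ‖gradient f x - g‖ ^ 2 := by
  have hγ1 : 0 < γ1 := hγ2.trans_le hγ12
  obtain ⟨hsΔ, hdec⟩ := hs
  have hsn : ‖s‖ ≤ γ1 * α * ‖g‖ := hsΔ.trans (radius_le hα hγ2 hγ12 g)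
  have hcauchy := hdec (γ2 * α) (by positivity) (le_radius hα hγ2 hγ12 g)
  have hdescent := le_add_inner_gradient_add_sq hf hlip x s
  have hsplit : ⟪gradient f x, s⟫ = ⟪g, s⟫ + ⟪gradient f x - g, s⟫ := by
    rw [← inner_add_left, add_sub_cancel]
  have hsH := (abs_le.1 (abs_inner_apply_le hH s)).1
  have hgH := (abs_le.1 (abs_inner_apply_le hH g)).2
  have hnoise : ⟪gradient f x - g, s⟫ ≤ ‖gradient f x - g‖ * (γ1 * α * ‖g‖) :=
    (real_inner_le_norm _ _).trans (by gcongr)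
  have hs2 : ‖s‖ ^ 2 ≤ (γ1 * α * ‖g‖) ^ 2 := by gcongr
  rw [le_div_iff₀ (by positivity)] at hαub
  set a := ‖gradient f x - g‖
  set b := ‖g‖
  have hcurv : (L + M) * (γ1 * α) ^ 2 ≤ γ2 * α / 4 := by nlinarith
  have hcurv' : M * (γ2 * α) ^ 2 ≤ γ2 * α / 4 := by
    refine le_trans ?_ hcurv
    gcongr
    linarith
  have hyoung : a * (γ1 * α * b) ≤ α * γ1 ^ 2 / γ2 * a ^ 2 + γ2 * α / 4 * b ^ 2 := by
    have hsq : α * γ1 ^ 2 / γ2 * a ^ 2 + γ2 * α / 4 * b ^ 2 - a * (γ1 * α * b)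
        = α / γ2 * (γ1 * a - γ2 * b / 2) ^ 2 := by
      field_simp
      ring
    have : 0 ≤ α / γ2 * (γ1 * a - γ2 * b / 2) ^ 2 := by positivity
    linarith
  have e1 : (1 / 2) * (γ2 * α) ^ 2 * ⟪g, H g⟫ ≤ (1 / 2) * (γ2 * α) ^ 2 * (M * b ^ 2) := by gcongr
  have e2 := mul_le_mul_of_nonneg_right hcurv' (sq_nonneg b)
  have e3 := mul_le_mul_of_nonneg_right hcurv (sq_nonneg b)
  have e4 := mul_le_mul_of_nonneg_left hs2 (add_pos hL hM).le
  nlinarith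

/-- Bias-variance identity: if the `m`-measurable `G` is the conditional expectation of `g`, then
`E‖g‖² = E‖G‖² + E‖G - g‖²`. -/
lemma integral_sq_norm_eq_add {n : ℕ} {Ω : Type*} {m m0 : MeasurableSpace Ω} {P : Measure Ω}
    [IsProbabilityMeasure P] (hm : m ≤ m0) {G g : Ω → EuclideanSpace ℝ (Fin n)}
    (hG : StronglyMeasurable[m] G) (hg : Integrable g P)
    (hG2 : Integrable (fun ω => ‖G ω‖ ^ 2) P) (hg2 : Integrable (fun ω => ‖g ω‖ ^ 2) P)
    (hcond : P[g|m] =ᵐ[P] G) :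
    Integrable (fun ω => ‖G ω - g ω‖ ^ 2) P ∧
      ∫ ω, ‖g ω‖ ^ 2 ∂P = ∫ ω, ‖G ω‖ ^ 2 ∂P + ∫ ω, ‖G ω - g ω‖ ^ 2 ∂P := by
  have hGm : AEStronglyMeasurable G P := (hG.mono hm).aestronglyMeasurable
  have hGL : MemLp G 2 P := (memLp_two_iff_integrable_sq_norm hGm).2 hG2
  have hgL : MemLp g 2 P := (memLp_two_iff_integrable_sq_norm hg.1).2 hg2
  have hint : Integrable (fun ω => ‖G ω - g ω‖ ^ 2) P := (hGL.sub hgL).integrable_norm_pow (by simp)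
  have hinner : Integrable (fun ω => ⟪G ω, g ω⟫) P := by
    refine (hG2.add hg2).mono' (hGm.inner hg.1) (ae_of_all _ fun ω => ?_)
    have := abs_real_inner_le_norm (G ω) (g ω)
    simp only [Real.norm_eq_abs, Pi.add_apply]
    nlinarith [sq_nonneg (‖G ω‖ - ‖g ω‖), sq_nonneg (‖G ω‖), sq_nonneg (‖g ω‖)]
  have hpull : ∫ ω, ⟪G ω, g ω⟫ ∂P = ∫ ω, ‖G ω‖ ^ 2 ∂P := by
    have h := condExp_bilin_of_stronglyMeasurable_left (μ := P) (innerSL ℝ) hG hinner hg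
    rw [← integral_condExp hm]
    refine integral_congr_ae ?_
    filter_upwards [h, hcond] with ω h1 h2
    rw [h2, innerSL_apply_apply, real_inner_self_eq_norm_sq] at h1
    exact h1
  refine ⟨hint, ?_⟩
  have hexp : ∀ ω, ‖G ω - g ω‖ ^ 2 = ‖G ω‖ ^ 2 - 2 * ⟪G ω, g ω⟫ + ‖g ω‖ ^ 2 := fun ω =>
    norm_sub_sq_real _ _
  simp_rw [hexp]
  have hsub : Integrable (fun ω => ‖G ω‖ ^ 2 - 2 * ⟪G ω, g ω⟫) P := hG2.sub (hinner.const_mul 2)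
  rw [integral_add hsub hg2, integral_sub hG2 (hinner.const_mul 2),
    integral_const_mul, hpull]
  ring

/-- Nonconvex case, fixed stepsize. -/
theorem trish_nonconvex_fixed_stepsize
    {n : ℕ} (hn : 1 ≤ n)
    (f : EuclideanSpace ℝ (Fin n) → ℝ)
    (L_g : ℝ) (hLg : 0 < L_g)
    (hf : ContDiff ℝ 2 f)
    (hlip : ∀ y z, ‖gradient f y - gradient f z‖ ≤ L_g * ‖y - z‖)
    (f_inf : ℝ) (hbdd : ∀ y, f_inf ≤ f y) (hfinf : f_inf = ⨅ y, f y)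
    {Ω : Type*} {m0 : MeasurableSpace Ω} (P : Measure Ω) [IsProbabilityMeasure P]
    (ℱ : Filtration ℕ m0)
    (x g s : ℕ → Ω → EuclideanSpace ℝ (Fin n))
    (H : ℕ → Ω → (EuclideanSpace ℝ (Fin n) →L[ℝ] EuclideanSpace ℝ (Fin n)))
    (α γ1 γ2 : ℝ) (hγ2 : 0 < γ2) (hγ12 : γ2 ≤ γ1)
    (x1 : EuclideanSpace ℝ (Fin n)) (hx1 : ∀ ω, x 1 ω = x1)
    (hx_meas : ∀ k, 1 ≤ k → StronglyMeasurable[ℱ k] (x k))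
    (hg_meas : ∀ k, 1 ≤ k → StronglyMeasurable[ℱ (k+1)] (g k))
    (hs_meas : ∀ k, 1 ≤ k → StronglyMeasurable[ℱ (k+1)] (s k))
    (hH_meas : ∀ k, 1 ≤ k → StronglyMeasurable[ℱ (k+1)] (H k))
    (hHsymm : ∀ k ω u v, ⟪H k ω u, v⟫ = ⟪u, H k ω v⟫)
    (hstep : ∀ k, 1 ≤ k → ∀ ω, x (k+1) ω = x k ω + s k ω)
    (hunbiased : ∀ k, 1 ≤ k → P[g k|ℱ k] =ᵐ[P] fun ω => gradient f (x k ω))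
    (hcauchy : ∀ k, 1 ≤ k → ∀ᵐ ω ∂P,
      CauchyDecrease (g k ω) (H k ω) (radius α γ1 γ2 (g k ω)) (s k ω))
    (hint_f : ∀ k, Integrable (fun ω => f (x k ω)) P)
    (hint_grad : ∀ k, Integrable (fun ω => ‖gradient f (x k ω)‖^2) P)
    (hint_g : ∀ k, Integrable (g k) P)
    (hint_g2 : ∀ k, Integrable (fun ω => ‖g k ω‖^2) P)
    (M_g M_H : ℝ) (hMg : 0 < M_g) (hMH : 0 < M_H)
    (hvar : ∀ k, 1 ≤ k → ∀ᵐ ω ∂P,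
      (P[(fun ω' => ‖gradient f (x k ω') - g k ω'‖^2)|ℱ k]) ω ≤ M_g)
    (hHbd : ∀ k, 1 ≤ k → ∀ᵐ ω ∂P, ‖H k ω‖ ≤ M_H)
    (hα : 0 < α) (hαub : α ≤ γ2 / (4 * γ1^2 * (L_g + M_H))) :
    ∀ K : ℕ, 1 ≤ K →
      ∫ ω, (∑ k ∈ Finset.Icc 1 K, ‖gradient f (x k ω)‖^2) ∂P ≤
        (8 / (γ2 * α)) * (f x1 - f_inf) + K * (8 * γ1^2 / γ2^2 - 1) * M_g := by
  have hγ1 : 0 < γ1 := hγ2.trans_le hγ12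
  have hdiff : Differentiable ℝ f := hf.differentiable (by norm_num)
  have hgradcont : Continuous (gradient f) := by
    refine (LipschitzWith.of_dist_le_mul (K := ⟨L_g, hLg.le⟩) fun y z => ?_).continuous
    rw [dist_eq_norm, dist_eq_norm]
    exact hlip y z
  have honestep : ∀ k, 1 ≤ k → ∫ ω, ‖gradient f (x k ω)‖ ^ 2 ∂P ≤
      2 / (γ2 * α) * (∫ ω, f (x k ω) ∂P - ∫ ω, f (x (k + 1) ω) ∂P)
        + (2 * γ1 ^ 2 / γ2 ^ 2 - 1) * M_g := by
    intro k hk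
    obtain ⟨hVint, hV⟩ := integral_sq_norm_eq_add (ℱ.le k)
      (hgradcont.comp_stronglyMeasurable (hx_meas k hk)) (hint_g k) (hint_grad k) (hint_g2 k)
      (hunbiased k hk)
    have hVM : ∫ ω, ‖gradient f (x k ω) - g k ω‖ ^ 2 ∂P ≤ M_g := by
      rw [← integral_condExp (ℱ.le k)]
      simpa using integral_mono_ae integrable_condExp (integrable_const M_g) (hvar k hk)
    have hsub : Integrable (fun ω => f (x k ω) - γ2 * α / 2 * ‖g k ω‖ ^ 2) P :=
      (hint_f k).sub ((hint_g2 k).const_mul _)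
    have hstepint : ∫ ω, f (x (k + 1) ω) ∂P ≤ ∫ ω, (f (x k ω) - γ2 * α / 2 * ‖g k ω‖ ^ 2
        + α * γ1 ^ 2 / γ2 * ‖gradient f (x k ω) - g k ω‖ ^ 2) ∂P := by
      refine integral_mono_ae (hint_f (k + 1))
        (hsub.add (hVint.const_mul _)) ?_
      filter_upwards [hcauchy k hk, hHbd k hk] with ω h1 h2
      rw [hstep k hk ω]
      exact trish_step_decrease hdiff hLg hMH hlip hγ2 hγ12 hα hαub h2 h1
    rw [integral_add hsub (hVint.const_mul _),
      integral_sub (hint_f k) ((hint_g2 k).const_mul _), integral_const_mul, integral_const_mul,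
      hV] at hstepint
    set V := ∫ ω, ‖gradient f (x k ω) - g k ω‖ ^ 2 ∂P
    set A := ∫ ω, ‖gradient f (x k ω)‖ ^ 2 ∂P
    set F := ∫ ω, f (x k ω) ∂P
    set F' := ∫ ω, f (x (k + 1) ω) ∂P
    have hcoef : 0 ≤ 2 * γ1 ^ 2 / γ2 ^ 2 - 1 := by
      rw [sub_nonneg, one_le_div (by positivity)]
      nlinarith
    have hA : A ≤ 2 / (γ2 * α) * (F - F') + (2 * γ1 ^ 2 / γ2 ^ 2 - 1) * V := by
      have h := mul_le_mul_of_nonneg_left hstepint (show 0 ≤ 2 / (γ2 * α) by positivity)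
      have e : 2 / (γ2 * α) * (F - γ2 * α / 2 * (A + V) + α * γ1 ^ 2 / γ2 * V)
          = 2 / (γ2 * α) * F - A + (2 * γ1 ^ 2 / γ2 ^ 2 - 1) * V := by
        field_simp
        ring
      rw [e] at h
      linarith
    have := mul_le_mul_of_nonneg_left hVM hcoef
    linarith
  have hsum : ∀ K : ℕ, ∑ k ∈ Finset.Icc 1 K, ∫ ω, ‖gradient f (x k ω)‖ ^ 2 ∂P ≤
      2 / (γ2 * α) * (f x1 - ∫ ω, f (x (K + 1) ω) ∂P)
        + K * (2 * γ1 ^ 2 / γ2 ^ 2 - 1) * M_g := by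
    intro K
    induction K with
    | zero => simp [hx1]
    | succ K ih =>
      rw [Finset.sum_Icc_succ_top (by omega)]
      have := honestep (K + 1) (by omega)
      push_cast
      linarith
  intro K _
  rw [integral_finsetSum _ fun k _ => hint_grad k]
  have hlow : f_inf ≤ ∫ ω, f (x (K + 1) ω) ∂P := by
    simpa using integral_mono (integrable_const f_inf) (hint_f (K + 1)) fun ω => hbdd (x (K + 1) ω)
  have hfinal : 2 / (γ2 * α) * (f x1 - ∫ ω, f (x (K + 1) ω) ∂P)
      ≤ 8 / (γ2 * α) * (f x1 - f_inf) := by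
    have h0 : 0 ≤ f x1 - f_inf := sub_nonneg.2 (hbdd x1)
    calc 2 / (γ2 * α) * (f x1 - ∫ ω, f (x (K + 1) ω) ∂P)
        ≤ 2 / (γ2 * α) * (f x1 - f_inf) := by gcongr
      _ ≤ 8 / (γ2 * α) * (f x1 - f_inf) := by gcongr; norm_num
  have hconst : (K : ℝ) * (2 * γ1 ^ 2 / γ2 ^ 2 - 1) * M_g
      ≤ K * (8 * γ1 ^ 2 / γ2 ^ 2 - 1) * M_g := by
    gcongr
    norm_num
  linarith [hsum K]
end
end

section
/- (Nonconvex case, diminishing stepsizes.) Consider a TRish process for f with constant parameters γ_{1,k} = γ1 ≥ γ2 = γ_{2,k} > 0 and stepsizes α_k = a/(b + k) for some a, b > 0 such that α_k ≤ γ2/(4γ1²(L_g + M_H)) for all k. Suppose there exist M_g, M_H > 0 such that for all k, E[‖∇f(x_k) − g_k‖² | ℱ_k] ≤ M_g·α_k and ‖H_k‖ ≤ M_H almost surely. Then sup_{K≥1} E[Σ_{k=1}^K α_k·‖∇f(x_k)‖²] < ∞, and E[(Σ_{k=1}^K α_k)^{-1} · Σ_{k=1}^K α_k·‖∇f(x_k)‖²]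 → 0 as K → ∞. -/
/-!
The mean square of the gradient noise `G - g` is at most `M_g α`, so no martingale argument is
needed: the claim follows from an inequality that holds along almost every path. The step
`-γ2 α g` is always feasible, so Cauchy decrease makes the model value at most about
`-γ2 α ‖g‖²`, whereas `‖s‖ ≤ γ1 α ‖g‖`. With the descent inequality for `f` and the stepsize bound
this gives
  `(γ2 / 4) α ‖∇f(x_k)‖² ≤ f(x_k) - f(x_{k+1}) + α (γ1²/γ2 + γ2/2) ‖∇f(x_k) - g_k‖²`
(`trish_pointwise`). After taking expectations the noise term is `O(α²)`. Telescoping, with `f`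
bounded below and `∑ α²` finite, bounds the weighted gradient sums uniformly in `K`; since `∑ α`
diverges, the weighted averages tend to zero.
-/

open MeasureTheory RealInnerProductSpace Filter

noncomputable section

/-- A function whose gradient is `L`-Lipschitz lies below its quadratic upper model. -/
lemma descent_lemma {n : ℕ} {f : EuclideanSpace ℝ (Fin n) → ℝ} {L : ℝ}
    (hf : Differentiable ℝ f)
    (hlip : ∀ y z, ‖gradient f y - gradient f z‖ ≤ L * ‖y - z‖)
    (y s : EuclideanSpace ℝ (Fin n)) :
    f (y + s) ≤ f y + ⟪gradient f y, s⟫ + L / 2 * ‖s‖ ^ 2 := by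
  -- The gap to the quadratic model along the segment is antitone on `[0, 1]`.
  let φ : ℝ → ℝ := fun t => f (y + t • s) - t * ⟪gradient f y, s⟫ - L / 2 * ‖s‖ ^ 2 * t ^ 2
  have hd : ∀ t, HasDerivAt φ
      (⟪gradient f (y + t • s), s⟫ - ⟪gradient f y, s⟫ - L * ‖s‖ ^ 2 * t) t := by
    intro t
    have h1 : HasDerivAt (fun t : ℝ => y + t • s) s t := by
      simpa using ((hasDerivAt_id t).smul_const s).const_add y
    have h2 : HasFDerivAt f (InnerProductSpace.toDual ℝ _ (gradient f (y + t • s)))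
        (y + t • s) := (hf (y + t • s)).hasGradientAt.hasFDerivAt
    have h3 := h2.comp_hasDerivAt t h1
    have h4 := (h3.sub ((hasDerivAt_id t).mul_const ⟪gradient f y, s⟫)).sub
      ((hasDerivAt_pow 2 t).const_mul (L / 2 * ‖s‖ ^ 2))
    refine HasDerivAt.congr_deriv h4 ?_
    simp
    ring
  have hanti : AntitoneOn φ (Set.Icc 0 1) := by
    apply antitoneOn_of_deriv_nonpos (convex_Icc 0 1)
    · exact fun t _ => (hd t).continuousAt.continuousWithinAt
    · exact fun t _ => (hd t).differentiableAt.differentiableWithinAt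
    · intro t ht
      rw [interior_Icc] at ht
      rw [(hd t).deriv, ← inner_sub_left]
      have h1 := real_inner_le_norm (gradient f (y + t • s) - gradient f y) s
      have h2 := hlip (y + t • s) y
      rw [add_sub_cancel_left, norm_smul, Real.norm_of_nonneg ht.1.le] at h2
      nlinarith [mul_le_mul_of_nonneg_right h2 (norm_nonneg s)]
  have h := hanti (Set.left_mem_Icc.2 zero_le_one) (Set.right_mem_Icc.2 zero_le_one) zero_le_one
  simp only [φ, one_smul, zero_smul, add_zero] at h
  linarith

lemma radius_bounds {n : ℕ} {α γ1 γ2 : ℝ} (hα : 0 ≤ α) (hγ2 : 0 < γ2) (hγ12 : γ2 ≤ γ1)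
    (g : EuclideanSpace ℝ (Fin n)) :
    γ2 * α * ‖g‖ ≤ radius α γ1 γ2 g ∧ radius α γ1 γ2 g ≤ γ1 * α * ‖g‖ := by
  have hγ1 : 0 < γ1 := hγ2.trans_le hγ12
  have h0 : γ2 * α * ‖g‖ ≤ γ1 * α * ‖g‖ := by gcongr
  unfold radius
  split_ifs with h1 h2
  · exact ⟨h0, le_rfl⟩
  · rw [not_lt, div_le_iff₀ hγ1] at h1
    rw [le_div_iff₀ hγ2] at h2
    constructor <;> nlinarith
  · exact ⟨le_rfl, h0⟩

/-- One-step decrease along a path: `G` is the true gradient at the current iterate, `g` its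
stochastic estimate. -/
lemma trish_pointwise {n : ℕ} {L M α γ1 γ2 : ℝ} (hL : 0 < L) (hM : 0 < M) (hα : 0 < α)
    (hγ2 : 0 < γ2) (hγ12 : γ2 ≤ γ1) (hub : α ≤ γ2 / (4 * γ1 ^ 2 * (L + M)))
    (G g s : EuclideanSpace ℝ (Fin n))
    (H : EuclideanSpace ℝ (Fin n) →L[ℝ] EuclideanSpace ℝ (Fin n)) (hH : ‖H‖ ≤ M)
    (hc : CauchyDecrease g H (radius α γ1 γ2 g) s) {u v : ℝ}
    (hdesc : v ≤ u + ⟪G, s⟫ + L / 2 * ‖s‖ ^ 2) :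
    γ2 / 4 * (α * ‖G‖ ^ 2) ≤ u - v + α * (γ1 ^ 2 / γ2 + γ2 / 2) * ‖G - g‖ ^ 2 := by
  have hγ1 : 0 < γ1 := hγ2.trans_le hγ12
  obtain ⟨hr1, hr2⟩ := radius_bounds hα.le hγ2 hγ12 g
  obtain ⟨hs, hdec⟩ := hc
  have hs' : ‖s‖ ≤ γ1 * α * ‖g‖ := hs.trans hr2
  have hquad : ∀ w, |⟪w, H w⟫| ≤ M * ‖w‖ ^ 2 := by
    intro w
    calc |⟪w, H w⟫| ≤ ‖w‖ * ‖H w‖ := abs_real_inner_le_norm _ _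
      _ ≤ ‖w‖ * (M * ‖w‖) := by
        gcongr
        exact H.le_of_opNorm_le hH w
      _ = M * ‖w‖ ^ 2 := by ring
  have h1 := hdec (γ2 * α) (by positivity) hr1
  have h2 := (abs_le.1 (hquad g)).2
  have h3 := (abs_le.1 (hquad s)).1
  have hss : ‖s‖ ^ 2 ≤ (γ1 * α * ‖g‖) ^ 2 := by gcongr
  rw [le_div_iff₀ (by positivity)] at hub
  have hk : (γ1 * α * ‖g‖) ^ 2 * (L + M) ≤ γ2 / 4 * α * ‖g‖ ^ 2 := by
    have := mul_le_mul_of_nonneg_right hub (show 0 ≤ α * ‖g‖ ^ 2 / 4 by positivity)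
    nlinarith
  have hq2 : (γ2 * α) ^ 2 * ⟪g, H g⟫ ≤ γ2 / 4 * α * ‖g‖ ^ 2 := by
    calc (γ2 * α) ^ 2 * ⟪g, H g⟫ ≤ (γ2 * α) ^ 2 * ((L + M) * ‖g‖ ^ 2) :=
          mul_le_mul_of_nonneg_left (h2.trans (by gcongr; linarith)) (sq_nonneg _)
      _ ≤ (γ1 * α) ^ 2 * ((L + M) * ‖g‖ ^ 2) := by gcongr
      _ = (γ1 * α * ‖g‖) ^ 2 * (L + M) := by ring
      _ ≤ _ := hk
  have hs2 : (L + M) * ‖s‖ ^ 2 ≤ γ2 / 4 * α * ‖g‖ ^ 2 := by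
    refine le_trans ?_ hk
    rw [mul_comm]
    gcongr
  have hin : ⟪G, s⟫ = ⟪g, s⟫ + ⟪G - g, s⟫ := by rw [inner_sub_left]; ring
  -- Young's inequality, weighted so that the `‖g‖²` part stays within the model decrease.
  have hnoise : ⟪G - g, s⟫ ≤ α * (γ2 / 4 * ‖g‖ ^ 2 + γ1 ^ 2 / γ2 * ‖G - g‖ ^ 2) := by
    calc ⟪G - g, s⟫ ≤ ‖G - g‖ * ‖s‖ := real_inner_le_norm _ _
      _ ≤ ‖G - g‖ * (γ1 * α * ‖g‖) := by gcongr
      _ = α * (γ1 * ‖G - g‖ * ‖g‖) := by ring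
      _ ≤ _ := by
        gcongr
        have h : γ2 / 4 * ‖g‖ ^ 2 + γ1 ^ 2 / γ2 * ‖G - g‖ ^ 2 - γ1 * ‖G - g‖ * ‖g‖
            = (γ2 * ‖g‖ / 2 - γ1 * ‖G - g‖) ^ 2 / γ2 := by
          field_simp
          ring
        have : 0 ≤ (γ2 * ‖g‖ / 2 - γ1 * ‖G - g‖) ^ 2 / γ2 := by positivity
        linarith
  have hG : ‖G‖ ^ 2 ≤ 2 * ‖g‖ ^ 2 + 2 * ‖G - g‖ ^ 2 := by
    have h := norm_add_le g (G - g)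
    rw [add_sub_cancel] at h
    nlinarith [sq_nonneg (‖g‖ - ‖G - g‖), norm_nonneg G]
  have hG' := mul_le_mul_of_nonneg_left hG (show 0 ≤ γ2 / 4 * α by positivity)
  linarith

lemma summable_step_sq {a b : ℝ} (hb : 0 < b) :
    Summable fun k : ℕ => (a / (b + k)) ^ 2 := by
  have h := (Real.summable_one_div_nat_pow.2 (one_lt_two)).mul_left (a ^ 2)
  rw [← summable_nat_add_iff 1] at h ⊢
  refine h.of_nonneg_of_le (fun k => by positivity) fun k => ?_
  rw [div_pow, div_eq_mul_one_div]
  gcongr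
  linarith

lemma tendsto_sum_step {a b : ℝ} (ha : 0 < a) (hb : 0 < b) :
    Tendsto (fun K : ℕ => ∑ k ∈ Finset.Icc 1 K, a / (b + k)) atTop atTop := by
  have h := Real.tendsto_sum_range_one_div_nat_succ_atTop.const_mul_atTop
    (show 0 < a / (b + 1) by positivity)
  refine tendsto_atTop_mono (fun K => ?_) h
  have hre : ∑ k ∈ Finset.Icc 1 K, a / (b + k) = ∑ i ∈ Finset.range K, a / (b + (i + 1 : ℕ)) := by
    induction K with
    | zero => simp
    | succ K ih => rw [Finset.sum_Icc_succ_top (by omega), ih, Finset.sum_range_succ]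
  rw [hre, Finset.mul_sum]
  gcongr with i
  rw [div_mul_div_comm, mul_one]
  gcongr
  -- `b + m ≤ (b + 1) m` for `m ≥ 1`
  push_cast
  nlinarith [mul_nonneg hb.le (Nat.cast_nonneg (α := ℝ) i)]

/-- Nonconvex case, diminishing stepsizes. -/
theorem trish_nonconvex_diminishing_stepsize
    {n : ℕ} (hn : 1 ≤ n)
    (f : EuclideanSpace ℝ (Fin n) → ℝ)
    (L_g : ℝ) (hLg : 0 < L_g)
    (hf : ContDiff ℝ 2 f)
    (hlip : ∀ y z, ‖gradient f y - gradient f z‖ ≤ L_g * ‖y - z‖)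
    (f_inf : ℝ) (hbdd : ∀ y, f_inf ≤ f y) (hfinf : f_inf = ⨅ y, f y)
    {Ω : Type*} {m0 : MeasurableSpace Ω} (P : Measure Ω) [IsProbabilityMeasure P]
    (ℱ : Filtration ℕ m0)
    (x g s : ℕ → Ω → EuclideanSpace ℝ (Fin n))
    (H : ℕ → Ω → (EuclideanSpace ℝ (Fin n) →L[ℝ] EuclideanSpace ℝ (Fin n)))
    (γ1 γ2 : ℝ) (hγ2 : 0 < γ2) (hγ12 : γ2 ≤ γ1)
    (a b : ℝ) (ha : 0 < a) (hb : 0 < b)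
    (α : ℕ → ℝ) (hαdef : ∀ k : ℕ, α k = a / (b + k))
    (x1 : EuclideanSpace ℝ (Fin n)) (hx1 : ∀ ω, x 1 ω = x1)
    (hx_meas : ∀ k, 1 ≤ k → StronglyMeasurable[ℱ k] (x k))
    (hg_meas : ∀ k, 1 ≤ k → StronglyMeasurable[ℱ (k+1)] (g k))
    (hs_meas : ∀ k, 1 ≤ k → StronglyMeasurable[ℱ (k+1)] (s k))
    (hH_meas : ∀ k, 1 ≤ k → StronglyMeasurable[ℱ (k+1)] (H k))
    (hHsymm : ∀ k ω u v, ⟪H k ω u, v⟫ = ⟪u, H k ω v⟫)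
    (hstep : ∀ k, 1 ≤ k → ∀ ω, x (k+1) ω = x k ω + s k ω)
    (hunbiased : ∀ k, 1 ≤ k → P[g k|ℱ k] =ᵐ[P] fun ω => gradient f (x k ω))
    (hcauchy : ∀ k, 1 ≤ k → ∀ᵐ ω ∂P,
      CauchyDecrease (g k ω) (H k ω) (radius (α k) γ1 γ2 (g k ω)) (s k ω))
    (hint_f : ∀ k, Integrable (fun ω => f (x k ω)) P)
    (hint_grad : ∀ k, Integrable (fun ω => ‖gradient f (x k ω)‖^2) P)
    (hint_g : ∀ k, Integrable (g k) P)
    (hint_g2 : ∀ k, Integrable (fun ω => ‖g k ω‖^2) P)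
    (M_g M_H : ℝ) (hMg : 0 < M_g) (hMH : 0 < M_H)
    (hvar : ∀ k, 1 ≤ k → ∀ᵐ ω ∂P,
      (P[(fun ω' => ‖gradient f (x k ω') - g k ω'‖^2)|ℱ k]) ω ≤ M_g * α k)
    (hHbd : ∀ k, 1 ≤ k → ∀ᵐ ω ∂P, ‖H k ω‖ ≤ M_H)
    (hαub : ∀ k, 1 ≤ k → α k ≤ γ2 / (4 * γ1^2 * (L_g + M_H))) :
    (∃ C : ℝ, ∀ K : ℕ, 1 ≤ K →
      ∫ ω, (∑ k ∈ Finset.Icc 1 K, α k * ‖gradient f (x k ω)‖^2) ∂P ≤ C) ∧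
    Tendsto (fun K : ℕ =>
        ∫ ω, ((∑ k ∈ Finset.Icc 1 K, α k)⁻¹
          * ∑ k ∈ Finset.Icc 1 K, α k * ‖gradient f (x k ω)‖^2) ∂P)
      atTop (nhds 0) := by
  have hαpos : ∀ k, 0 < α k := fun k => by rw [hαdef]; positivity
  have hγ1 : 0 < γ1 := hγ2.trans_le hγ12
  have hdiff : Differentiable ℝ f := hf.differentiable (by norm_num)
  have hcont : Continuous (gradient f) :=
    (LipschitzWith.of_dist_le_mul (K := L_g.toNNReal) fun y z => by
      simpa [dist_eq_norm, hLg.le] using hlip y z).continuous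
  set D : ℝ := γ1 ^ 2 / γ2 + γ2 / 2 with hD
  have hDpos : 0 < D := by positivity
  -- The integrability matters: otherwise the conditional variance bound would concern a junk value.
  have hint_e : ∀ k, 1 ≤ k → Integrable (fun ω => ‖gradient f (x k ω) - g k ω‖ ^ 2) P := by
    intro k hk
    have hxm : AEStronglyMeasurable (fun ω => gradient f (x k ω)) P :=
      hcont.comp_aestronglyMeasurable ((hx_meas k hk).mono (ℱ.le k)).aestronglyMeasurable
    have hgm : AEStronglyMeasurable (g k) P := (hint_g k).aestronglyMeasurable
    exact (((memLp_two_iff_integrable_sq_norm hxm).2 (hint_grad k)).sub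
      ((memLp_two_iff_integrable_sq_norm hgm).2 (hint_g2 k))).integrable_norm_pow two_ne_zero
  have hnoise : ∀ k, 1 ≤ k → ∫ ω, ‖gradient f (x k ω) - g k ω‖ ^ 2 ∂P ≤ M_g * α k := by
    intro k hk
    rw [← integral_condExp (ℱ.le k)]
    calc _ ≤ ∫ _ω, M_g * α k ∂P :=
          integral_mono_ae integrable_condExp (integrable_const _) (hvar k hk)
      _ = M_g * α k := by simp
  have hone : ∀ k, 1 ≤ k → γ2 / 4 * (α k * ∫ ω, ‖gradient f (x k ω)‖ ^ 2 ∂P) ≤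
      (∫ ω, f (x k ω) ∂P) - (∫ ω, f (x (k + 1) ω) ∂P) + D * M_g * α k ^ 2 := by
    intro k hk
    have hpt : ∀ᵐ ω ∂P, γ2 / 4 * (α k * ‖gradient f (x k ω)‖ ^ 2) ≤
        f (x k ω) - f (x (k + 1) ω) + α k * D * ‖gradient f (x k ω) - g k ω‖ ^ 2 := by
      filter_upwards [hcauchy k hk, hHbd k hk] with ω hc hH
      refine trish_pointwise hLg hMH (hαpos k) hγ2 hγ12 (hαub k hk) _ _ _ _ hH hc ?_
      rw [hstep k hk]
      exact descent_lemma hdiff hlip _ _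
    have h := integral_mono_ae (((hint_grad k).const_mul (α k)).const_mul (γ2 / 4))
      (((hint_f k).sub (hint_f (k + 1))).add ((hint_e k hk).const_mul (α k * D))) hpt
    have hR : ∫ ω, (f (x k ω) - f (x (k + 1) ω)
          + α k * D * ‖gradient f (x k ω) - g k ω‖ ^ 2) ∂P
        = (∫ ω, f (x k ω) ∂P) - (∫ ω, f (x (k + 1) ω) ∂P)
          + α k * D * ∫ ω, ‖gradient f (x k ω) - g k ω‖ ^ 2 ∂P := by
      rw [← integral_sub (hint_f k) (hint_f (k + 1)), ← integral_const_mul]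
      exact integral_add ((hint_f k).sub (hint_f (k + 1))) ((hint_e k hk).const_mul (α k * D))
    rw [integral_const_mul, integral_const_mul] at h
    replace h := h.trans_eq hR
    have h' := mul_le_mul_of_nonneg_left (hnoise k hk)
      (mul_pos (hαpos k) hDpos).le
    nlinarith
  have hsummable : Summable fun k => α k ^ 2 := by
    simpa only [hαdef] using summable_step_sq (a := a) hb
  have hint_sum : ∀ K : ℕ, ∫ ω, (∑ k ∈ Finset.Icc 1 K, α k * ‖gradient f (x k ω)‖ ^ 2) ∂P
      = ∑ k ∈ Finset.Icc 1 K, α k * ∫ ω, ‖gradient f (x k ω)‖ ^ 2 ∂P := by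
    intro K
    rw [integral_finsetSum _ fun k _ => (hint_grad k).const_mul (α k)]
    simp only [integral_const_mul]
  have htel : ∀ K : ℕ, γ2 / 4 * ∑ k ∈ Finset.Icc 1 K, α k * ∫ ω, ‖gradient f (x k ω)‖ ^ 2 ∂P ≤
      (∫ ω, f (x 1 ω) ∂P) - (∫ ω, f (x (K + 1) ω) ∂P)
        + D * M_g * ∑ k ∈ Finset.Icc 1 K, α k ^ 2 := by
    intro K
    induction K with
    | zero => simp
    | succ K ih =>
      rw [Finset.sum_Icc_succ_top (by omega), Finset.sum_Icc_succ_top (by omega)]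
      have := hone (K + 1) (by omega)
      linarith
  set C : ℝ := 4 / γ2 * ((∫ ω, f (x 1 ω) ∂P) - f_inf + D * M_g * ∑' k, α k ^ 2) with hC
  have hbound : ∀ K : ℕ,
      ∫ ω, (∑ k ∈ Finset.Icc 1 K, α k * ‖gradient f (x k ω)‖ ^ 2) ∂P ≤ C := by
    intro K
    rw [hint_sum]
    have h1 : f_inf ≤ ∫ ω, f (x (K + 1) ω) ∂P := by
      calc f_inf = ∫ _ω, f_inf ∂P := by simp
        _ ≤ _ := integral_mono (integrable_const _) (hint_f _) fun ω => hbdd _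
    have h2 : D * M_g * ∑ k ∈ Finset.Icc 1 K, α k ^ 2 ≤ D * M_g * ∑' k, α k ^ 2 := by
      gcongr
      exact hsummable.sum_le_tsum _ fun k _ => sq_nonneg _
    have h3 := htel K
    rw [hC, div_mul_eq_mul_div, le_div_iff₀ hγ2]
    linarith
  refine ⟨⟨C, fun K _ => hbound K⟩, ?_⟩
  have hdiv : Tendsto (fun K : ℕ => ∑ k ∈ Finset.Icc 1 K, α k) atTop atTop := by
    simpa only [hαdef] using tendsto_sum_step ha hb
  have hlim : Tendsto (fun K : ℕ => (∑ k ∈ Finset.Icc 1 K, α k)⁻¹ * C) atTop (nhds 0) := by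
    simpa using hdiv.inv_tendsto_atTop.mul_const C
  have hnn : ∀ K : ℕ, 0 ≤ (∑ k ∈ Finset.Icc 1 K, α k)⁻¹ := fun K =>
    inv_nonneg.2 (Finset.sum_nonneg fun k _ => (hαpos k).le)
  refine squeeze_zero (fun K => ?_) (fun K => ?_) hlim
  · exact integral_nonneg fun ω => mul_nonneg (hnn K)
      (Finset.sum_nonneg fun k _ => mul_nonneg (hαpos k).le (sq_nonneg _))
  · rw [integral_const_mul]
    exact mul_le_mul_of_nonneg_left (hbound K) (hnn K)
end
end
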